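/- arXiv:2602.22081 — 3 statements merged into one kernel-verified Lean document; each statement's English description precedes it below -/
import Mathlib

section
/- Let M, L, w be positive integers with w ≥ 2. If every prime factor of L is at least 2w - 1, then every MC-CAC of length L and weight w in M channels has at most M(M-1)L/(w(w-1)) + M(L-1)/(2w-2) codewords. -/
/-- The set of time slots used by codeword `S` on channel `i`. -/
def chan {M L : ℕ} (S : Finset (Fin M × ZMod L)) (i : Fin M) : Finset (ZMod L) :=
  (S.filter fun p => p.1 = i).image Prod.snd

/-- The `(i,j)` set of differences of a codeword `S ⊆ {1,…,M} × Z_L`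
(with `0` removed when `i = j`). -/
def Darr {M L : ℕ} (S : Finset (Fin M × ZMod L)) (i j : Fin M) : Finset (ZMod L) :=
  if i = j then (((chan S i) ×ˢ (chan S j)).image fun p => p.1 - p.2).erase 0
  else ((chan S i) ×ˢ (chan S j)).image fun p => p.1 - p.2

/-- A multichannel conflict-avoiding code of length `L` and weight `w` in `M` channels. -/
def IsMCCAC (M L w : ℕ) (C : Finset (Finset (Fin M × ZMod L))) : Prop :=
  (∀ S ∈ C, S.card = w) ∧
  ∀ S ∈ C, ∀ S' ∈ C, S ≠ S' → ∀ i j : Fin M, Disjoint (Darr S i j) (Darr S' i j)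

/-!
Cauchy–Davenport applies to the differences of a codeword because no nontrivial subgroup has fewer
than `2 * w - 1` elements. If a codeword uses `k` channels, with `s i` time slots on channel `i`,
then it has at least `2 * s i - 2` differences at `(i, i)` and `s i + s j - 1` at `(i, j)`, hence at
least `2 * (w - k)` on the diagonal and `(k - 1) * (2 * w - k)` off it. Weighting the diagonal
differences by `w` and the others by `2` gives

`w * (2 * (w - k)) + 2 * ((k - 1) * (2 * w - k)) = 2 * w * (w - 1) + 2 * (k - 1) * (w - k)`,

which is at least `2 * w * (w - 1)` whatever `k` is. As difference sets of distinct codewords are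
disjoint, the total weight is at most `w * (M * (L - 1)) + 2 * (M * (M - 1) * L)`.
-/

open Finset
open scoped Pointwise

theorem sum_offDiag_add_eq {ι R : Type*} [CommRing R] (s : Finset ι) (f : ι → R) :
    ∑ p ∈ s.offDiag, (f p.1 + f p.2) = 2 * (#s - 1) * ∑ i ∈ s, f i := by
  classical
  have split : ∑ p ∈ s ×ˢ s, (f p.1 + f p.2) =
      ∑ i ∈ s, (f i + f i) + ∑ p ∈ s.offDiag, (f p.1 + f p.2) := by
    rw [← diag_union_offDiag, sum_union s.disjoint_diag_offDiag, sum_diag]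
  rw [sum_product] at split
  simp only [sum_add_distrib, sum_const, nsmul_eq_mul, ← mul_sum] at split ⊢
  linear_combination -split

section AddGroup

variable {G : Type*} [AddGroup G]

theorem le_addMinOrder_of_forall_prime_le [Finite G] {n : ℕ}
    (h : ∀ p : ℕ, p.Prime → p ∣ Nat.card G → n ≤ p) : (n : ℕ∞) ≤ AddMonoid.minOrder G := by
  refine AddMonoid.le_minOrder.2 fun a ha _ => Nat.cast_le.2 ?_
  have prime_minFac : (addOrderOf a).minFac.Prime :=
    Nat.minFac_prime (AddMonoid.addOrderOf_eq_one_iff.not.2 ha)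
  calc n ≤ (addOrderOf a).minFac :=
        h _ prime_minFac ((Nat.minFac_dvd _).trans (addOrderOf_dvd_natCard a))
    _ ≤ addOrderOf a := Nat.minFac_le (addOrderOf_pos a)

theorem card_add_card_le_card_sub_add_one [DecidableEq G] {A B : Finset G} (hA : A.Nonempty)
    (hB : B.Nonempty) (h : ((#A + #B - 1 : ℕ) : ℕ∞) ≤ AddMonoid.minOrder G) :
    #A + #B ≤ #(A - B) + 1 := by
  have cauchy_davenport := cauchy_davenport_minOrder_add hA hB.neg
  rw [card_neg, ← sub_eq_add_neg, min_eq_right h, Nat.cast_le] at cauchy_davenport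
  omega

end AddGroup

section Codeword

variable {ι G : Type*} [DecidableEq ι] [DecidableEq G]

/-- The set of time slots that the codeword `S` uses on channel `i`; this is `chan` for an arbitrary
type `ι` of channels and an arbitrary type `G` of time slots. -/
def slots (S : Finset (ι × G)) (i : ι) : Finset G :=
  {p ∈ S | p.1 = i}.image Prod.snd

/-- The set of channels on which the codeword `S` uses at least one time slot. -/
def usedChannels (S : Finset (ι × G)) : Finset ι :=
  S.image Prod.fst

/-- The set of differences of the codeword `S` from channel `j` to channel `i`, without `0` if
`i = j`; this is `Darr` for an arbitrary type `ι` of channels and an arbitrary additive group `G` of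
time slots. -/
def differenceSet [AddGroup G] (S : Finset (ι × G)) (i j : ι) : Finset G :=
  if i = j then (slots S i - slots S j).erase 0 else slots S i - slots S j

/-- A multichannel conflict-avoiding code of weight `w`; this is `IsMCCAC` for an arbitrary type `ι`
of channels and an arbitrary additive group `G` of time slots. -/
structure IsConflictAvoidingCode [AddGroup G] (w : ℕ) (C : Finset (Finset (ι × G))) : Prop where
  card_eq : ∀ S ∈ C, #S = w
  pairwiseDisjoint : ∀ i j, (C : Set (Finset (ι × G))).PairwiseDisjoint (differenceSet · i j)

variable {S : Finset (ι × G)} {i j : ι}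

theorem slots_nonempty_iff : (slots S i).Nonempty ↔ i ∈ usedChannels S := by
  simp [slots, usedChannels, Finset.Nonempty]

theorem card_slots (S : Finset (ι × G)) (i : ι) : #(slots S i) = #{p ∈ S | p.1 = i} :=
  card_image_of_injOn fun _ hp _ hq hpq =>
    Prod.ext ((mem_filter.1 hp).2.trans (mem_filter.1 hq).2.symm) hpq

theorem card_slots_le (S : Finset (ι × G)) (i : ι) : #(slots S i) ≤ #S :=
  (card_slots S i).trans_le (card_filter_le _ _)

theorem sum_usedChannels_card_slots (S : Finset (ι × G)) :
    ∑ i ∈ usedChannels S, #(slots S i) = #S := by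
  simp only [card_slots]
  exact (card_eq_sum_card_image Prod.fst S).symm

variable [AddGroup G]

theorem card_differenceSet_self_add_one (h : i ∈ usedChannels S) :
    #(differenceSet S i i) + 1 = #(slots S i - slots S i) := by
  have zero_mem : (0 : G) ∈ slots S i - slots S i := (slots_nonempty_iff.2 h).zero_mem_sub
  rw [differenceSet, if_pos rfl, card_erase_add_one zero_mem]

theorem card_slots_add_card_slots_le_card_sub_add_one
    (hG : ((2 * #S - 1 : ℕ) : ℕ∞) ≤ AddMonoid.minOrder G)
    (hi : i ∈ usedChannels S) (hj : j ∈ usedChannels S) :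
    #(slots S i) + #(slots S j) ≤ #(slots S i - slots S j) + 1 := by
  refine card_add_card_le_card_sub_add_one (slots_nonempty_iff.2 hi) (slots_nonempty_iff.2 hj)
    (le_trans (Nat.cast_le.2 ?_) hG)
  have := card_slots_le S i
  have := card_slots_le S j
  omega

theorem two_mul_card_sub_le_sum_card_differenceSet_self
    (hG : ((2 * #S - 1 : ℕ) : ℕ∞) ≤ AddMonoid.minOrder G) :
    2 * ((#S : ℝ) - #(usedChannels S)) ≤ ∑ i ∈ usedChannels S, (#(differenceSet S i i) : ℝ) := by
  calc 2 * ((#S : ℝ) - #(usedChannels S))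
      = ∑ i ∈ usedChannels S, (2 * (#(slots S i) : ℝ) - 2) := by
        rw [sum_sub_distrib, ← mul_sum, ← Nat.cast_sum, sum_usedChannels_card_slots, sum_const,
          nsmul_eq_mul]
        ring
    _ ≤ ∑ i ∈ usedChannels S, (#(differenceSet S i i) : ℝ) := by
        refine sum_le_sum fun i hi => ?_
        have : 2 * #(slots S i) ≤ #(differenceSet S i i) + 2 := by
          have := card_slots_add_card_slots_le_card_sub_add_one hG hi hi
          have := card_differenceSet_self_add_one hi
          omega
        rw [sub_le_iff_le_add]
        exact_mod_cast this

theorem card_sub_one_mul_le_sum_offDiag_card_differenceSet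
    (hG : ((2 * #S - 1 : ℕ) : ℕ∞) ≤ AddMonoid.minOrder G) :
    ((#(usedChannels S) : ℝ) - 1) * (2 * #S - #(usedChannels S)) ≤
      ∑ p ∈ (usedChannels S).offDiag, (#(differenceSet S p.1 p.2) : ℝ) := by
  calc ((#(usedChannels S) : ℝ) - 1) * (2 * #S - #(usedChannels S))
      = ∑ p ∈ (usedChannels S).offDiag, ((#(slots S p.1) : ℝ) + #(slots S p.2) - 1) := by
        rw [sum_sub_distrib, sum_offDiag_add_eq _ fun i => (#(slots S i) : ℝ), ← Nat.cast_sum,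
          sum_usedChannels_card_slots, sum_const, nsmul_one, offDiag_card,
          Nat.cast_sub (Nat.le_mul_self _), Nat.cast_mul]
        ring
    _ ≤ ∑ p ∈ (usedChannels S).offDiag, (#(differenceSet S p.1 p.2) : ℝ) := by
        refine sum_le_sum fun p hp => ?_
        obtain ⟨hi, hj, hij⟩ := mem_offDiag.1 hp
        rw [sub_le_iff_le_add, differenceSet, if_neg hij]
        exact_mod_cast card_slots_add_card_slots_le_card_sub_add_one hG hi hj

theorem two_mul_card_mul_le_weighted_sum_card_differenceSet [Fintype ι] (hS : S.Nonempty)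
    (hG : ((2 * #S - 1 : ℕ) : ℕ∞) ≤ AddMonoid.minOrder G) :
    2 * (#S : ℝ) * (#S - 1) ≤
      #S * ∑ i, (#(differenceSet S i i) : ℝ) +
        2 * ∑ p ∈ univ.offDiag, (#(differenceSet S p.1 p.2) : ℝ) := by
  have one_le_card : (1 : ℝ) ≤ #(usedChannels S) := by
    exact_mod_cast (hS.image Prod.fst).card_pos
  have card_le : (#(usedChannels S) : ℝ) ≤ #S := by exact_mod_cast card_image_le
  calc 2 * (#S : ℝ) * (#S - 1)
      ≤ #S * (2 * ((#S : ℝ) - #(usedChannels S))) +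
          2 * (((#(usedChannels S) : ℝ) - 1) * (2 * #S - #(usedChannels S))) := by
        linarith [mul_nonneg (sub_nonneg.2 one_le_card) (sub_nonneg.2 card_le)]
    _ ≤ #S * ∑ i ∈ usedChannels S, (#(differenceSet S i i) : ℝ) +
          2 * ∑ p ∈ (usedChannels S).offDiag, (#(differenceSet S p.1 p.2) : ℝ) := by
        gcongr
        · exact two_mul_card_sub_le_sum_card_differenceSet_self hG
        · exact card_sub_one_mul_le_sum_offDiag_card_differenceSet hG
    _ ≤ #S * ∑ i, (#(differenceSet S i i) : ℝ) +
          2 * ∑ p ∈ univ.offDiag, (#(differenceSet S p.1 p.2) : ℝ) := by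
        gcongr <;> exact subset_univ _

end Codeword

namespace IsConflictAvoidingCode

variable {ι G : Type*} [DecidableEq ι] [DecidableEq G] [AddGroup G] [Fintype G] {w : ℕ}
  {C : Finset (Finset (ι × G))}

theorem sum_card_differenceSet_le (hC : IsConflictAvoidingCode w C) (i j : ι) :
    ∑ S ∈ C, (#(differenceSet S i j) : ℝ) ≤ Fintype.card G := by
  rw [← Nat.cast_sum, ← card_biUnion (hC.pairwiseDisjoint i j)]
  exact_mod_cast card_le_univ _

theorem sum_card_differenceSet_self_le (hC : IsConflictAvoidingCode w C) (i : ι) :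
    ∑ S ∈ C, (#(differenceSet S i i) : ℝ) ≤ Fintype.card G - 1 := by
  have zero_notMem : (0 : G) ∉ C.biUnion (differenceSet · i i) := by simp [differenceSet]
  rw [← Nat.cast_sum, ← card_biUnion (hC.pairwiseDisjoint i i), le_sub_iff_add_le]
  exact_mod_cast card_lt_univ_of_notMem zero_notMem

theorem card_mul_le [Fintype ι] (hC : IsConflictAvoidingCode w C) (hw : 0 < w)
    (hG : ((2 * w - 1 : ℕ) : ℕ∞) ≤ AddMonoid.minOrder G) :
    #C * (2 * (w : ℝ) * (w - 1)) ≤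
      w * (Fintype.card ι * (Fintype.card G - 1)) +
        2 * (Fintype.card ι * (Fintype.card ι - 1) * Fintype.card G) := by
  calc #C * (2 * (w : ℝ) * (w - 1))
      = ∑ S ∈ C, 2 * (w : ℝ) * (w - 1) := by rw [sum_const, nsmul_eq_mul]
    _ ≤ ∑ S ∈ C, (w * ∑ i, (#(differenceSet S i i) : ℝ) +
          2 * ∑ p ∈ univ.offDiag, (#(differenceSet S p.1 p.2) : ℝ)) := by
        refine sum_le_sum fun S hS => ?_
        obtain rfl := hC.card_eq S hS
        exact two_mul_card_mul_le_weighted_sum_card_differenceSet (card_pos.1 hw) hG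
    _ = w * ∑ i, ∑ S ∈ C, (#(differenceSet S i i) : ℝ) +
          2 * ∑ p ∈ univ.offDiag, ∑ S ∈ C, (#(differenceSet S p.1 p.2) : ℝ) := by
        rw [sum_add_distrib, ← mul_sum, ← mul_sum, sum_comm (s := C), sum_comm (s := C)]
    _ ≤ w * ∑ _i : ι, ((Fintype.card G : ℝ) - 1) +
          2 * ∑ _p ∈ (univ : Finset ι).offDiag, (Fintype.card G : ℝ) := by
        gcongr with i _ p _
        · exact hC.sum_card_differenceSet_self_le i
        · exact hC.sum_card_differenceSet_le p.1 p.2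
    _ = _ := by
        rw [sum_const, sum_const, offDiag_card, card_univ, nsmul_eq_mul, nsmul_eq_mul,
          Nat.cast_sub (Nat.le_mul_self _), Nat.cast_mul]
        ring

end IsConflictAvoidingCode

theorem stmt_1_general {ι G : Type*} [Fintype ι] [DecidableEq ι] [AddGroup G] [Fintype G]
    [DecidableEq G] {w : ℕ} (hw : 2 ≤ w)
    (hprime : ∀ p : ℕ, p.Prime → p ∣ Fintype.card G → 2 * w - 1 ≤ p)
    {C : Finset (Finset (ι × G))} (hC : IsConflictAvoidingCode w C) :
    (#C : ℝ) ≤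
      (Fintype.card ι : ℝ) * ((Fintype.card ι : ℝ) - 1) * (Fintype.card G : ℝ)
          / ((w : ℝ) * ((w : ℝ) - 1))
        + (Fintype.card ι : ℝ) * ((Fintype.card G : ℝ) - 1) / (2 * (w : ℝ) - 2) := by
  have w_sub_one_pos : (0 : ℝ) < w - 1 := sub_pos.2 (by exact_mod_cast hw)
  have card_le_div := (le_div_iff₀ (by positivity)).2 <| hC.card_mul_le (by positivity)
    (le_addMinOrder_of_forall_prime_le (by rwa [Nat.card_eq_fintype_card]))
  refine card_le_div.trans_eq ?_
  rw [show 2 * (w : ℝ) - 2 = 2 * (w - 1) by ring]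
  field_simp
  ring

theorem IsMCCAC.isConflictAvoidingCode {M L w : ℕ} {C : Finset (Finset (Fin M × ZMod L))}
    (hC : IsMCCAC M L w C) : IsConflictAvoidingCode w C where
  card_eq := hC.1
  pairwiseDisjoint i j S hS S' hS' hne := hC.2 S hS S' hS' hne i j

theorem stmt_1 (M L w : ℕ) (hM : 0 < M) (hL : 0 < L) (hw : 2 ≤ w)
    (hprime : ∀ p : ℕ, p.Prime → p ∣ L → 2 * w - 1 ≤ p)
    (C : Finset (Finset (Fin M × ZMod L))) (hC : IsMCCAC M L w C) :
    (C.card : ℝ) ≤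
      (M : ℝ) * ((M : ℝ) - 1) * (L : ℝ) / ((w : ℝ) * ((w : ℝ) - 1))
      + (M : ℝ) * ((L : ℝ) - 1) / (2 * (w : ℝ) - 2) := by
  have : NeZero L := ⟨hL.ne'⟩
  simpa only [Fintype.card_fin, ZMod.card] using
    stmt_1_general hw (by simpa only [ZMod.card] using hprime) hC.isConflictAvoidingCode
end

section
/- Let w ≥ 2 be an integer and let p_1 < p_2 < ... < p_n be primes such that 2w - 2 divides p_i - 1 for each i. Suppose that for each i = 1, ..., n there exists an equi-difference CAC of length p_i and weight w with (p_i - 1)/(2w - 2) codewords. Then for any positive integers r_1, ..., r_n, the maximum number of codewords of a CAC of length p_1^{r_1}···p_n^{r_n} and weight w equals (p_1^{r_1}···p_n^{r_n} - 1)/(2w - 2). -/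
/-- The set of nonzero differences of a subset `S ⊆ Z_L`. -/
def dstar {L : ℕ} (S : Finset (ZMod L)) : Finset (ZMod L) :=
  ((S ×ˢ S).image fun p => p.1 - p.2).erase 0

/-- A conflict-avoiding code of length `L` and weight `w`. -/
def IsCAC (L w : ℕ) (C : Finset (Finset (ZMod L))) : Prop :=
  (∀ S ∈ C, S.card = w) ∧
  ∀ S ∈ C, ∀ S' ∈ C, S ≠ S' → Disjoint (dstar S) (dstar S')

/-- A codeword is equi-difference if it is of the form `{0, g, 2g, …, (w-1)g}`. -/
def IsEquiDiff {L : ℕ} (w : ℕ) (S : Finset (ZMod L)) : Prop :=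
  ∃ g : ZMod L, S = (Finset.range w).image fun j : ℕ => (j : ZMod L) * g

/-!
Call `G ⊆ A` a splitting of the abelian group `A` by `M ⊆ ℤ` if every nonzero element of `A` is
uniquely `m • g` with `m ∈ M` and `g ∈ G`. For `M = {±1, …, ±(w - 1)}`, the nonzero differences of
`{0, g, …, (w - 1)g}` are the multiples `m • g ≠ 0` with `m ∈ M`. Hence a splitting of `Z_L` by `M`
generates an equi-difference code with `(L - 1) / |M|` codewords, and when all prime factors of `L`
are at least `2w - 1 = |M| + 1`, the generators of any such code form a splitting by counting.

Splittings extend: given a subgroup `H` on which `M` acts by bijections, the union of a splitting of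
`H` and the preimage of a splitting of `A ⧸ H` is a splitting of `A`. Peeling off subgroups of prime
order, where the bijectivity is automatic, splittings of `Z_p` for the primes `p ∣ |A|` produce one
of `A`. Both the counting and the optimality rest on Cauchy–Davenport: under the same condition on
`L`, every codeword `S` has `|S - S| ≥ 2w - 1`.
-/

section Splitting

variable {A B : Type*} [AddCommGroup A] [AddCommGroup B] {M : Set ℤ} {G : Set A}

/-- `G` is a splitting set of the abelian group `A` with multiplier set `M` (in the sense of Stein):
every nonzero element of `A` is `m • g` for a unique pair `(m, g) ∈ M × G`, and no such `m • g`
vanishes. -/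
def IsSplitting (M : Set ℤ) (G : Set A) : Prop :=
  Set.BijOn (fun z : ℤ × A ↦ z.1 • z.2) (M ×ˢ G) {0}ᶜ

namespace IsSplitting

theorem zsmul_ne_zero (hG : IsSplitting M G) {m : ℤ} (hm : m ∈ M) {g : A} (hg : g ∈ G) :
    m • g ≠ 0 :=
  hG.mapsTo (Set.mk_mem_prod hm hg)

theorem eq_and_eq_of_zsmul_eq (hG : IsSplitting M G) {m m' : ℤ} (hm : m ∈ M) (hm' : m' ∈ M)
    {g g' : A} (hg : g ∈ G) (hg' : g' ∈ G) (h : m • g = m' • g') : m = m' ∧ g = g' :=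
  Prod.ext_iff.1 (hG.injOn (Set.mk_mem_prod hm hg) (Set.mk_mem_prod hm' hg') h)

theorem exists_zsmul_eq (hG : IsSplitting M G) {x : A} (hx : x ≠ 0) :
    ∃ m ∈ M, ∃ g ∈ G, m • g = x := by
  obtain ⟨⟨m, g⟩, ⟨hm, hg⟩, rfl⟩ := hG.surjOn hx
  exact ⟨m, hm, g, hg, rfl⟩

theorem ncard_mul_ncard [Finite A] (hG : IsSplitting M G) :
    M.ncard * G.ncard = Nat.card A - 1 := by
  rw [← Set.ncard_prod, ← hG.injOn.ncard_image, hG.image_eq, Set.ncard_compl,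
    Set.ncard_singleton]

theorem of_surjOn [Finite A] (hM : M.Finite)
    (hsurj : Set.SurjOn (fun z : ℤ × A ↦ z.1 • z.2) (M ×ˢ G) {0}ᶜ)
    (hcard : M.ncard * G.ncard ≤ Nat.card A - 1) : IsSplitting M G := by
  have hfin : (M ×ˢ G).Finite := hM.prod G.toFinite
  have hcard' : (M ×ˢ G).ncard ≤ ({0}ᶜ : Set A).ncard := by
    rwa [Set.ncard_prod, Set.ncard_compl, Set.ncard_singleton]
  have himage : {0}ᶜ = (fun z : ℤ × A ↦ z.1 • z.2) '' M ×ˢ G :=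
    Set.eq_of_subset_of_ncard_le hsurj ((Set.ncard_image_le hfin).trans hcard')
  have hinj : Set.InjOn (fun z : ℤ × A ↦ z.1 • z.2) (M ×ˢ G) :=
    Set.injOn_of_ncard_image_eq
      ((Set.ncard_image_le hfin).antisymm (himage ▸ hcard')) hfin
  exact ⟨fun z hz ↦ himage ▸ Set.mem_image_of_mem _ hz, hinj, hsurj⟩

theorem empty_of_subsingleton [Subsingleton A] : IsSplitting M (∅ : Set A) :=
  ⟨by simp [Set.MapsTo], by simp, fun x hx ↦ (hx (Subsingleton.elim x 0)).elim⟩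

theorem image_addEquiv (hG : IsSplitting M G) (e : A ≃+ B) : IsSplitting M (e '' G) := by
  refine ⟨?_, ?_, fun x hx ↦ ?_⟩
  · rintro ⟨m, _⟩ ⟨hm, g, hg, rfl⟩
    simpa [← map_zsmul] using hG.zsmul_ne_zero hm hg
  · rintro ⟨m, _⟩ ⟨hm, g, hg, rfl⟩ ⟨m', _⟩ ⟨hm', g', hg', rfl⟩ h
    have h' : m • g = m' • g' := e.injective (by simpa using h)
    obtain ⟨rfl, rfl⟩ := hG.eq_and_eq_of_zsmul_eq hm hm' hg hg' h'
    rfl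
  · obtain ⟨m, hm, g, hg, hx⟩ := hG.exists_zsmul_eq (e.symm.map_ne_zero_iff.2 hx)
    exact ⟨(m, e g), ⟨hm, g, hg, rfl⟩, by simp [← map_zsmul, hx]⟩

theorem extension {H : AddSubgroup A} {GH : Set H} {GQ : Set (A ⧸ H)}
    (hbij : ∀ m ∈ M, Function.Bijective fun h : H ↦ m • h)
    (hGH : IsSplitting M GH) (hGQ : IsSplitting M GQ) :
    IsSplitting M (((↑) : H → A) '' GH ∪ ((↑) : A → A ⧸ H) ⁻¹' GQ) := by
  have zsmul_notMem {m : ℤ} (hm : m ∈ M) {g : A} (hg : (g : A ⧸ H) ∈ GQ) : m • g ∉ H := by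
    rw [← QuotientAddGroup.eq_zero_iff, QuotientAddGroup.mk_zsmul]
    exact hGQ.zsmul_ne_zero hm hg
  refine ⟨?_, ?_, fun x hx ↦ ?_⟩
  · rintro ⟨m, _⟩ ⟨hm, ⟨g, hg, rfl⟩ | hg⟩
    · exact Subtype.coe_ne_coe.2 (hGH.zsmul_ne_zero hm hg)
    · exact fun h0 ↦ zsmul_notMem hm hg (by simp_all)
  · rintro ⟨m, g⟩ ⟨hm, hg⟩ ⟨m', g'⟩ ⟨hm', hg'⟩ (heq : m • g = m' • g')
    rcases hg, hg' with ⟨⟨g, hg, rfl⟩ | hg, ⟨g', hg', rfl⟩ | hg'⟩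
    · have heqH : m • g = m' • g' := Subtype.ext heq
      obtain ⟨rfl, rfl⟩ := hGH.eq_and_eq_of_zsmul_eq hm hm' hg hg' heqH
      rfl
    · exact (zsmul_notMem hm' hg' (heq ▸ H.zsmul_mem g.2 m)).elim
    · exact (zsmul_notMem hm hg (heq ▸ H.zsmul_mem g'.2 m')).elim
    · have heqQ : m • (g : A ⧸ H) = m' • (g' : A ⧸ H) := congrArg ((↑) : A → A ⧸ H) heq
      obtain ⟨rfl, hgg'⟩ := hGQ.eq_and_eq_of_zsmul_eq hm hm' hg hg' heqQ
      have hdiff : -g + g' ∈ H := QuotientAddGroup.eq.1 hgg'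
      have hzero : (⟨-g + g', hdiff⟩ : H) = 0 :=
        (hbij m hm).injective (Subtype.ext (by simp [heq]))
      simpa [neg_add_eq_zero] using hzero
  · by_cases hxH : x ∈ H
    · obtain ⟨m, hm, g, hg, hgx⟩ := hGH.exists_zsmul_eq (x := ⟨x, hxH⟩) (by simpa using hx)
      exact ⟨(m, g), ⟨hm, .inl ⟨g, hg, rfl⟩⟩, congrArg Subtype.val hgx⟩
    · obtain ⟨m, hm, c, hc, hcx⟩ := hGQ.exists_zsmul_eq (mt (QuotientAddGroup.eq_zero_iff x).1 hxH)
      obtain ⟨b, rfl⟩ := QuotientAddGroup.mk_surjective c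
      -- Correct the lift `b` by some `h ∈ H`, so that its `m`-th multiple is `x` itself.
      obtain ⟨h, hh⟩ := (hbij m hm).surjective ⟨-(m • b) + x, QuotientAddGroup.eq.1 hcx⟩
      have hhx : m • (h : A) = -(m • b) + x := congrArg Subtype.val hh
      exact ⟨(m, b + h), ⟨hm, .inr (by simpa using hc)⟩, by simp [hhx]⟩

theorem bijective_zsmul_of_prime_card (hA : (Nat.card A).Prime) (hG : IsSplitting M G) {m : ℤ}
    (hm : m ∈ M) : Function.Bijective fun x : A ↦ m • x := by
  have : Finite A := Nat.finite_of_card_ne_zero hA.ne_zero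
  have : Nontrivial A := Finite.one_lt_card_iff_nontrivial.1 hA.one_lt
  have : Fact (Nat.card A).Prime := ⟨hA⟩
  obtain ⟨x, hx⟩ := exists_ne (0 : A)
  obtain ⟨-, -, g, hg, -⟩ := hG.exists_zsmul_eq hx
  have hker : (zsmulAddGroupHom m : A →+ A).ker = ⊥ := by
    refine (AddSubgroup.eq_bot_or_eq_top_of_prime_card _).resolve_right fun htop ↦ ?_
    exact hG.zsmul_ne_zero hm hg (AddMonoidHom.mem_ker.1 (htop ▸ AddSubgroup.mem_top g))
  exact Finite.injective_iff_bijective.1 ((AddMonoidHom.ker_eq_bot_iff _).1 hker)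

end IsSplitting

theorem exists_isSplitting_of_forall_prime_dvd_card [Finite A]
    (hM : ∀ q : ℕ, q.Prime → q ∣ Nat.card A → ∃ G : Set (ZMod q), IsSplitting M G) :
    ∃ G : Set A, IsSplitting M G := by
  induction hn : Nat.card A using Nat.strong_induction_on generalizing A with
  | _ n ih =>
    subst hn
    rcases subsingleton_or_nontrivial A with _ | _
    · exact ⟨∅, .empty_of_subsingleton⟩
    obtain ⟨q, hq, hqA⟩ := Nat.exists_prime_and_dvd (Finite.one_lt_card (α := A)).ne'
    have : Fact q.Prime := ⟨hq⟩
    obtain ⟨x, hx⟩ := exists_prime_addOrderOf_dvd_card' q hqA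
    let H := AddSubgroup.zmultiples x
    have hH : Nat.card H = q := by rw [Nat.card_zmultiples, hx]
    have hcard : Nat.card A = Nat.card (A ⧸ H) * q :=
      hH ▸ AddSubgroup.card_eq_card_quotient_mul_card_addSubgroup H
    have hlt : Nat.card (A ⧸ H) < Nat.card A :=
      hcard ▸ lt_mul_of_one_lt_right Nat.card_pos hq.one_lt
    obtain ⟨GQ, hGQ⟩ :=
      ih _ hlt (fun q' hq' hdvd ↦ hM q' hq' (hdvd.trans ⟨q, hcard⟩)) rfl
    obtain ⟨Gq, hGq⟩ := hM q hq hqA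
    have hGH := hGq.image_addEquiv
      ((ZMod.ringEquivCongr hH.symm).toAddEquiv.trans (zmodAddCyclicAddEquiv inferInstance))
    exact ⟨_, hGH.extension (fun m ↦ hGH.bijective_zsmul_of_prime_card (hH ▸ hq)) hGQ⟩

end Splitting

section EquiDifference

variable {L w : ℕ}

/-- The multipliers `{±1, …, ±(w - 1)}`: the nonzero differences of two indices in
`{0, …, w - 1}`. -/
noncomputable def multipliers (w : ℕ) : Finset ℤ := (Finset.Ioo (-(w : ℤ)) w).erase 0

theorem mem_multipliers {m : ℤ} : m ∈ multipliers w ↔ m ≠ 0 ∧ -(w : ℤ) < m ∧ m < w := by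
  simp [multipliers]

theorem card_multipliers (w : ℕ) : (multipliers w).card = 2 * w - 2 := by
  rcases w.eq_zero_or_pos with rfl | hw
  · rfl
  · rw [multipliers, Finset.card_erase_of_mem (by simpa), Int.card_Ioo]
    omega

theorem one_mem_multipliers (hw : 2 ≤ w) : 1 ∈ multipliers w :=
  mem_multipliers.2 (by omega)

theorem natCast_sub_natCast_mem_multipliers {i j : ℕ} (hi : i < w) (hj : j < w) (hij : i ≠ j) :
    (i - j : ℤ) ∈ multipliers w :=
  mem_multipliers.2 (by omega)

theorem exists_sub_eq_of_mem_multipliers {m : ℤ} (hm : m ∈ multipliers w) :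
    ∃ i < w, ∃ j < w, (i - j : ℤ) = m :=
  have := mem_multipliers.1 hm
  ⟨m.toNat, by omega, (-m).toNat, by omega, by omega⟩

/-- The equi-difference codeword `{0, g, 2g, …, (w - 1)g}` with generator `g`. -/
def equiDiffWord (w : ℕ) (g : ZMod L) : Finset (ZMod L) :=
  (Finset.range w).image fun j : ℕ ↦ (j : ZMod L) * g

theorem mem_dstar {S : Finset (ZMod L)} {x : ZMod L} :
    x ∈ dstar S ↔ x ≠ 0 ∧ ∃ a ∈ S, ∃ b ∈ S, a - b = x := by
  simp [dstar, and_assoc]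

theorem mem_dstar_equiDiffWord {g x : ZMod L} :
    x ∈ dstar (equiDiffWord w g) ↔ x ≠ 0 ∧ ∃ m ∈ multipliers w, m • g = x := by
  simp only [mem_dstar, equiDiffWord, Finset.exists_mem_image, Finset.mem_range]
  refine and_congr_right fun hx ↦ ⟨?_, ?_⟩
  · rintro ⟨i, hi, j, hj, rfl⟩
    have hij : i ≠ j := by rintro rfl; simp at hx
    exact ⟨i - j, natCast_sub_natCast_mem_multipliers hi hj hij, by simp [sub_mul]⟩
  · rintro ⟨m, hm, rfl⟩
    obtain ⟨i, hi, j, hj, rfl⟩ := exists_sub_eq_of_mem_multipliers hm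
    exact ⟨i, hi, j, hj, by simp [sub_mul]⟩

namespace IsSplitting

variable {G : Finset (ZMod L)}

theorem card_equiDiffWord (hG : IsSplitting (multipliers w : Set ℤ) (G : Set (ZMod L)))
    {g : ZMod L} (hg : g ∈ G) : (equiDiffWord w g).card = w := by
  rw [equiDiffWord, Finset.card_image_of_injOn, Finset.card_range]
  intro i hi j hj (heq : (i : ZMod L) * g = j * g)
  by_contra hij
  have hmem := natCast_sub_natCast_mem_multipliers (by simpa using hi) (by simpa using hj) hij
  exact hG.zsmul_ne_zero hmem hg (by simp [sub_mul, heq])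

theorem isCAC_image_equiDiffWord
    (hG : IsSplitting (multipliers w : Set ℤ) (G : Set (ZMod L))) :
    IsCAC L w (G.image (equiDiffWord w)) := by
  simp only [IsCAC, Finset.forall_mem_image]
  refine ⟨fun g hg ↦ hG.card_equiDiffWord hg, fun g hg g' hg' hne ↦ ?_⟩
  refine Finset.disjoint_left.2 fun x hx hx' ↦ hne ?_
  obtain ⟨-, m, hm, rfl⟩ := mem_dstar_equiDiffWord.1 hx
  obtain ⟨-, m', hm', heq⟩ := mem_dstar_equiDiffWord.1 hx'
  rw [(hG.eq_and_eq_of_zsmul_eq hm hm' hg hg' heq.symm).2]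

theorem injOn_equiDiffWord (hw : 2 ≤ w)
    (hG : IsSplitting (multipliers w : Set ℤ) (G : Set (ZMod L))) :
    Set.InjOn (equiDiffWord w) (G : Set (ZMod L)) := by
  intro g hg g' hg' heq
  have hone := one_mem_multipliers hw
  have hmem : (1 : ℤ) • g ∈ dstar (equiDiffWord w g') :=
    heq ▸ mem_dstar_equiDiffWord.2 ⟨hG.zsmul_ne_zero hone hg, 1, hone, rfl⟩
  obtain ⟨-, m, hm, hmg⟩ := mem_dstar_equiDiffWord.1 hmem
  exact (hG.eq_and_eq_of_zsmul_eq hone hm hg hg' hmg.symm).2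

theorem card_image_equiDiffWord_mul [NeZero L] (hw : 2 ≤ w)
    (hG : IsSplitting (multipliers w : Set ℤ) (G : Set (ZMod L))) :
    (G.image (equiDiffWord w)).card * (2 * w - 2) = L - 1 := by
  have hcard := hG.ncard_mul_ncard
  rwa [Set.ncard_coe_finset, Set.ncard_coe_finset, card_multipliers, Nat.card_zmod, mul_comm,
    ← Finset.card_image_of_injOn (hG.injOn_equiDiffWord hw)] at hcard

end IsSplitting

end EquiDifference

section UpperBound

variable {L w : ℕ}

theorem le_minOrder_of_forall_prime_dvd_card {A : Type*} [AddGroup A] {k : ℕ}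
    (h : ∀ q : ℕ, q.Prime → q ∣ Nat.card A → k ≤ q) : (k : ℕ∞) ≤ AddMonoid.minOrder A := by
  refine AddMonoid.le_minOrder.2 fun a ha hfin ↦ Nat.cast_le.2 ?_
  have hne : addOrderOf a ≠ 1 := mt AddMonoid.addOrderOf_eq_one_iff.1 ha
  calc k ≤ (addOrderOf a).minFac :=
        h _ (Nat.minFac_prime hne) ((Nat.minFac_dvd _).trans (addOrderOf_dvd_natCard a))
    _ ≤ addOrderOf a := Nat.minFac_le hfin.addOrderOf_pos

open Pointwise in
theorem two_mul_card_sub_two_le_card_dstar {S : Finset (ZMod L)}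
    (hL : ((2 * S.card - 1 : ℕ) : ℕ∞) ≤ AddMonoid.minOrder (ZMod L)) :
    2 * S.card - 2 ≤ (dstar S).card := by
  rcases S.eq_empty_or_nonempty with rfl | hS
  · simp
  have hCD : 2 * S.card - 1 ≤ (S - S).card := by
    have := cauchy_davenport_minOrder_add hS hS.neg
    rw [Finset.card_neg, ← two_mul, min_eq_right hL, ← sub_eq_add_neg] at this
    exact_mod_cast this
  calc 2 * S.card - 2 ≤ (S - S).card - 1 := by omega
    _ ≤ ((S - S).erase 0).card := Finset.pred_card_le_card_erase

theorem biUnion_dstar_subset_univ_erase_zero [NeZero L] (C : Finset (Finset (ZMod L))) :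
    C.biUnion dstar ⊆ Finset.univ.erase 0 :=
  Finset.biUnion_subset.2 fun _ _ ↦ Finset.erase_subset_erase 0 (Finset.subset_univ _)

namespace IsCAC

variable {C : Finset (Finset (ZMod L))}

theorem card_mul_le_card_biUnion_dstar (hC : IsCAC L w C)
    (hL : ((2 * w - 1 : ℕ) : ℕ∞) ≤ AddMonoid.minOrder (ZMod L)) :
    C.card * (2 * w - 2) ≤ (C.biUnion dstar).card := by
  rw [Finset.card_biUnion hC.2, ← smul_eq_mul]
  refine Finset.card_nsmul_le_sum _ _ _ fun S hS ↦ ?_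
  obtain rfl := hC.1 S hS
  exact two_mul_card_sub_two_le_card_dstar hL

theorem card_mul_le [NeZero L] (hC : IsCAC L w C)
    (hL : ((2 * w - 1 : ℕ) : ℕ∞) ≤ AddMonoid.minOrder (ZMod L)) :
    C.card * (2 * w - 2) ≤ L - 1 := by
  simpa using (hC.card_mul_le_card_biUnion_dstar hL).trans
    (Finset.card_le_card (biUnion_dstar_subset_univ_erase_zero C))

theorem biUnion_dstar_eq [NeZero L] (hC : IsCAC L w C)
    (hL : ((2 * w - 1 : ℕ) : ℕ∞) ≤ AddMonoid.minOrder (ZMod L))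
    (hcard : C.card * (2 * w - 2) = L - 1) : C.biUnion dstar = Finset.univ.erase 0 := by
  refine Finset.eq_of_subset_of_card_le (biUnion_dstar_subset_univ_erase_zero C) ?_
  simpa [← hcard] using hC.card_mul_le_card_biUnion_dstar hL

theorem exists_isSplitting [NeZero L] (hC : IsCAC L w C) (hE : ∀ S ∈ C, IsEquiDiff w S)
    (hL : ((2 * w - 1 : ℕ) : ℕ∞) ≤ AddMonoid.minOrder (ZMod L))
    (hcard : C.card * (2 * w - 2) = L - 1) :
    ∃ G : Set (ZMod L), IsSplitting (multipliers w : Set ℤ) G := by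
  choose! γ hγ using hE
  refine ⟨γ '' C, .of_surjOn (multipliers w).finite_toSet (fun x hx ↦ ?_) ?_⟩
  · have hx' : x ∈ C.biUnion dstar := by simpa [hC.biUnion_dstar_eq hL hcard] using hx
    obtain ⟨S, hS, hxS⟩ := Finset.mem_biUnion.1 hx'
    rw [hγ S hS] at hxS
    obtain ⟨-, m, hm, hmx⟩ := mem_dstar_equiDiffWord.1 hxS
    exact ⟨(m, γ S), ⟨hm, S, hS, rfl⟩, hmx⟩
  · rw [Set.ncard_coe_finset, card_multipliers, Nat.card_zmod, ← hcard, mul_comm]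
    gcongr
    exact (Set.ncard_image_le C.finite_toSet).trans_eq (Set.ncard_coe_finset C)

end IsCAC

end UpperBound

theorem exists_eq_of_prime_dvd_prod_pow {ι : Type*} [Fintype ι] {p r : ι → ℕ}
    (hp : ∀ i, (p i).Prime) {q : ℕ} (hq : q.Prime) (hdvd : q ∣ ∏ i, p i ^ r i) :
    ∃ i, q = p i := by
  obtain ⟨i, -, hi⟩ := (hq.prime.dvd_finsetProd_iff _).1 hdvd
  exact ⟨i, (Nat.prime_dvd_prime_iff_eq hq (hp i)).1 (hq.dvd_of_dvd_pow hi)⟩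

theorem stmt_6 (w n : ℕ) (hw : 2 ≤ w) (p : Fin n → ℕ) (hp : ∀ i, (p i).Prime)
    (hmono : StrictMono p) (hdvd : ∀ i, 2 * w - 2 ∣ p i - 1)
    (hCAC : ∀ i, ∃ C : Finset (Finset (ZMod (p i))),
      IsCAC (p i) w C ∧ (∀ S ∈ C, IsEquiDiff w S) ∧ C.card = (p i - 1) / (2 * w - 2))
    (r : Fin n → ℕ) (hr : ∀ i, 0 < r i) :
    IsGreatest {k : ℕ | ∃ C : Finset (Finset (ZMod (∏ i, p i ^ r i))),
        IsCAC (∏ i, p i ^ r i) w C ∧ C.card = k}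
      (((∏ i, p i ^ r i) - 1) / (2 * w - 2)) := by
  set L := ∏ i, p i ^ r i
  have : NeZero L := ⟨Finset.prod_ne_zero_iff.2 fun i _ ↦ pow_ne_zero _ (hp i).ne_zero⟩
  have le_p (i : Fin n) : 2 * w - 1 ≤ p i := by
    have := Nat.le_of_dvd (Nat.sub_pos_of_lt (hp i).one_lt) (hdvd i)
    omega
  have le_minOrder : ((2 * w - 1 : ℕ) : ℕ∞) ≤ AddMonoid.minOrder (ZMod L) :=
    le_minOrder_of_forall_prime_dvd_card fun q hq hqL ↦ by
      obtain ⟨i, rfl⟩ := exists_eq_of_prime_dvd_prod_pow hp hq (Nat.card_zmod L ▸ hqL)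
      exact le_p i
  constructor
  · obtain ⟨G, hG⟩ : ∃ G : Set (ZMod L), IsSplitting (multipliers w : Set ℤ) G := by
      refine exists_isSplitting_of_forall_prime_dvd_card fun q hq hqL ↦ ?_
      obtain ⟨i, rfl⟩ := exists_eq_of_prime_dvd_prod_pow hp hq (Nat.card_zmod L ▸ hqL)
      obtain ⟨C, hC, hE, hcard⟩ := hCAC i
      have : NeZero (p i) := ⟨hq.ne_zero⟩
      exact hC.exists_isSplitting hE (ZMod.minOrder_of_prime hq ▸ Nat.cast_le.2 (le_p i))
        (hcard ▸ Nat.div_mul_cancel (hdvd i))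
    lift G to Finset (ZMod L) using G.toFinite
    exact ⟨_, hG.isCAC_image_equiDiffWord,
      Nat.eq_div_of_mul_eq_left (by omega) (hG.card_image_equiDiffWord_mul hw)⟩
  · rintro _ ⟨C, hC, rfl⟩
    exact (Nat.le_div_iff_mul_le (by omega)).2 (hC.card_mul_le le_minOrder)
end

section
/- Let L' and w be positive integers with w ≥ 2. If every prime factor of L' is at least 2w - 1, then every MC-CAC of length (w-1)L' and weight w in 2 channels has at most L' + ⌊(L' + w - 3)/(w - 1)⌋ codewords. -/
/-!
Write `k = w - 1` and `L = k * L'`. Dyson transforms turn nonempty sets `A`, `B` of an abelian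
group into `A'`, `B'` with `|A'| + |B'| = |A| + |B|` and `|A'| ≤ |A + B|`, where `B'` lies in a
coset of the stabilizer `H` of `A'`; so `|B'| ≤ |H|` and `|H|` divides `|A'|`. In `ZMod L` the order
of a subgroup either divides `k`, and then its elements are `k`-torsion, or is at least `2 * k + 1`.
Hence
* if `|A| + |B| = k + 1`, then `|A - B| ≥ k`;
* if `|A| ≤ k + 1`, then `A - A` has at least `2 * |A|` elements, provided that its `k`-torsion
  elements are counted twice.

A codeword lying in a single channel thus takes up at least `2 * k` of this weighted count on the
diagonal difference sets, and one meeting both channels at least `2 * k - 2` of it together with `k`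
elements of `D(1, 2)`. Summed over the codewords, at most `L + k - 2` is available on each diagonal
and `L` off it.
-/

open Finset
open scoped Pointwise

section AbelianGroup

variable {G : Type*} [AddCommGroup G] [DecidableEq G]

lemma card_stabilizer_dvd_card (A : Finset G) : Nat.card (AddAction.stabilizer G A) ∣ #A := by
  let H := AddAction.stabilizer G (A : Set G)
  have hpreimage : (QuotientAddGroup.mk : G → G ⧸ H) ⁻¹' (QuotientAddGroup.mk '' A) = A := by
    rw [QuotientAddGroup.preimage_image_mk_eq_add, AddAction.add_stabilizer_self]
  have hcard := Nat.card_congr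
    (QuotientAddGroup.preimageMkEquivAddSubgroupProdSet H (QuotientAddGroup.mk '' (A : Set G)))
  rw [hpreimage, Nat.card_prod, SetLike.coe_sort_coe, Nat.card_eq_finsetCard] at hcard
  rw [← AddAction.stabilizer_coe_finset]
  exact ⟨_, hcard⟩

lemma finite_stabilizer {A : Finset G} (hA : A.Nonempty) : Finite (AddAction.stabilizer G A) := by
  rw [← AddAction.stabilizer_coe_finset]
  exact AddAction.stabilizer_finite hA A.finite_toSet

lemma card_le_natCard_of_forall_sub_mem {H : AddSubgroup G} [Finite H] {B : Finset G}
    (hB : ∀ x ∈ B - B, x ∈ H) : #B ≤ Nat.card H := by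
  rcases B.eq_empty_or_nonempty with rfl | ⟨c, hc⟩
  · simp
  · rw [← Nat.card_eq_finsetCard]
    refine Nat.card_le_card_of_injective (fun b : B ↦ ⟨b - c, hB _ (sub_mem_sub b.2 hc)⟩) ?_
    intro b b' hbb'
    exact Subtype.ext (sub_left_injective (congrArg Subtype.val hbb'))

lemma exists_addDysonETransform_card_snd_lt {A B : Finset G}
    (hAB : ¬ ∀ x ∈ B - B, x ∈ AddAction.stabilizer G A) :
    ∃ e, (addDysonETransform e (A, B)).2.Nonempty ∧ #(addDysonETransform e (A, B)).2 < #B := by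
  push Not at hAB
  obtain ⟨x, hx, hxA⟩ := hAB
  obtain ⟨b, hb, c, hc, rfl⟩ := mem_sub.1 hx
  rw [AddAction.mem_stabilizer_finset'] at hxA
  push Not at hxA
  obtain ⟨a, ha, hbca⟩ := hxA
  have mem_snd (y : G) :
      y ∈ (addDysonETransform (a - c) (A, B)).2 ↔ y ∈ B ∧ y - c + a ∈ A := by
    rw [addDysonETransform_snd, mem_inter, mem_neg_vadd_finset_iff, vadd_eq_add,
      show a - c + y = y - c + a by abel]
  refine ⟨a - c, ⟨c, (mem_snd c).2 ⟨hc, by simpa⟩⟩, card_lt_card ⟨inter_subset_left, ?_⟩⟩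
  exact fun hsub ↦ hbca ((mem_snd b).1 (hsub hb)).2

theorem exists_sub_subset_stabilizer {A B : Finset G} (hA : A.Nonempty) (hB : B.Nonempty) :
    ∃ A' B' : Finset G, A'.Nonempty ∧ B'.Nonempty ∧ B' ⊆ B ∧ #A' + #B' = #A + #B ∧
      #A' ≤ #(A + B) ∧ ∀ x ∈ B' - B', x ∈ AddAction.stabilizer G A' := by
  by_cases hAB : ∀ x ∈ B - B, x ∈ AddAction.stabilizer G A
  · exact ⟨A, B, hA, hB, Subset.rfl, rfl, card_le_card_add_right hB, hAB⟩
  · obtain ⟨e, hne, hlt⟩ := exists_addDysonETransform_card_snd_lt hAB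
    obtain ⟨A', B', hA', hB', hB'sub, hcard, hA'le, hstab⟩ :=
      exists_sub_subset_stabilizer (hA.mono subset_union_left) hne
    exact ⟨A', B', hA', hB', hB'sub.trans inter_subset_left,
      hcard.trans (addDysonETransform.card e (A, B)),
      hA'le.trans (card_le_card (addDysonETransform.subset e (A, B))), hstab⟩
termination_by #B
decreasing_by exact hlt

theorem le_card_add_of_forall_card_dvd_or_le {k : ℕ} {A B : Finset G}
    (hG : ∀ H : AddSubgroup G, Finite H → Nat.card H ∣ k ∨ k ≤ Nat.card H)
    (hA : A.Nonempty) (hB : B.Nonempty) (hAB : k + 1 ≤ #A + #B) : k ≤ #(A + B) := by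
  obtain ⟨A', B', hA', -, -, hcard, hA'le, hstab⟩ := exists_sub_subset_stabilizer hA hB
  have hfinite := finite_stabilizer hA'
  have hdvd := card_stabilizer_dvd_card A'
  refine le_trans ?_ hA'le
  rcases hG _ hfinite with hk | hk
  · have hB'le := card_le_natCard_of_forall_sub_mem hstab
    exact Nat.le_of_lt_add_of_dvd (by omega) hk hdvd
  · exact hk.trans (Nat.le_of_dvd hA'.card_pos hdvd)

/-- The cardinality of `D` with the elements killed by `k` counted twice. Both the lower bound for
difference sets and the upper bound from disjointness are stated for this count. -/
def torsionWeight (k : ℕ) (D : Finset G) : ℕ :=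
  #D + #{x ∈ D | k • x = 0}

lemma torsionWeight_erase_zero_add_two (k : ℕ) {D : Finset G} (hD : 0 ∈ D) :
    torsionWeight k (D.erase 0) + 2 = torsionWeight k D := by
  have hcard := card_erase_add_one hD
  have hcard_torsion := card_erase_add_one (s := {x ∈ D | k • x = 0}) (a := 0) (by simp [hD])
  simp only [torsionWeight, filter_erase]
  omega

lemma card_le_card_filter_nsmul_eq_zero {k : ℕ} {H : AddSubgroup G} {A B : Finset G}
    (hH : Nat.card H ∣ k) (hB : ∀ x ∈ B - B, x ∈ H) (hBA : B ⊆ A) :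
    #B ≤ #{x ∈ A - A | k • x = 0} := by
  rcases B.eq_empty_or_nonempty with rfl | ⟨c, hc⟩
  · simp
  · refine card_le_card_of_injOn (· - c) (fun b hb ↦ ?_) sub_left_injective.injOn
    have hord : addOrderOf (b - c) ∣ Nat.card H :=
      H.addOrderOf_dvd_natCard (hB _ (sub_mem_sub hb hc))
    exact mem_filter.2 ⟨sub_mem_sub (hBA hb) (hBA hc),
      addOrderOf_dvd_iff_nsmul_eq_zero.1 (hord.trans hH)⟩

theorem two_mul_card_le_torsionWeight_sub {k : ℕ} {A : Finset G}
    (hG : ∀ H : AddSubgroup G, Finite H → Nat.card H ∣ k ∨ 2 * #A ≤ Nat.card H + 1)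
    (hA : A.Nonempty) : 2 * #A ≤ torsionWeight k (A - A) := by
  obtain ⟨A', B', hA', -, hB'sub, hcard, hA'le, hstab⟩ := exists_sub_subset_stabilizer hA.neg hA
  rw [card_neg] at hcard
  rw [neg_add_eq_sub] at hA'le
  rw [torsionWeight]
  rcases hG _ (finite_stabilizer hA') with hk | hk
  · have hB'le := card_le_card_filter_nsmul_eq_zero hk hstab hB'sub
    omega
  · have hHle := Nat.le_of_dvd hA'.card_pos (card_stabilizer_dvd_card A')
    have htorsion : 0 < #{x ∈ A - A | k • x = 0} := card_pos.2 ⟨0, by simp [hA.zero_mem_sub]⟩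
    omega

lemma torsionWeight_univ_le [Fintype G] [IsAddCyclic G] {k : ℕ} (hk : 0 < k) :
    torsionWeight k (univ : Finset G) ≤ Fintype.card G + k :=
  Nat.add_le_add_left (IsAddCyclic.card_nsmul_eq_zero_le hk) _

end AbelianGroup

lemma dvd_or_le_of_dvd_mul {d k m n : ℕ} (hm : ∀ p : ℕ, p.Prime → p ∣ m → n ≤ p)
    (hd : 0 < d) (h : d ∣ k * m) : d ∣ k ∨ n ≤ d := by
  by_cases hdm : d.Coprime m
  · exact .inl (hdm.dvd_of_dvd_mul_right h)
  · obtain ⟨p, hp, hpd, hpm⟩ := Nat.Prime.not_coprime_iff_dvd.1 hdm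
    exact .inr ((hm p hp hpm).trans (Nat.le_of_dvd hd hpd))

lemma natCard_addSubgroup_zmod_dvd_or_le {k m n : ℕ}
    (hm : ∀ p : ℕ, p.Prime → p ∣ m → n ≤ p) (H : AddSubgroup (ZMod (k * m))) [Finite H] :
    Nat.card H ∣ k ∨ n ≤ Nat.card H :=
  dvd_or_le_of_dvd_mul hm Nat.card_pos (by simpa using H.card_addSubgroup_dvd_card)

lemma sum_card_le_card_of_pairwiseDisjoint {α β : Type*} {C : Finset α}
    {f : α → Finset β} {T : Finset β} (hf : (C : Set α).PairwiseDisjoint f)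
    (hT : ∀ x ∈ C, f x ⊆ T) : ∑ x ∈ C, #(f x) ≤ #T := by
  classical
  rw [← card_biUnion hf]
  exact card_le_card (biUnion_subset.2 hT)

lemma sum_torsionWeight_le {G α : Type*} [AddCommGroup G] [DecidableEq G] (k : ℕ) {C : Finset α}
    {f : α → Finset G} {T : Finset G} (hf : (C : Set α).PairwiseDisjoint f)
    (hT : ∀ x ∈ C, f x ⊆ T) : ∑ x ∈ C, torsionWeight k (f x) ≤ torsionWeight k T := by
  simp only [torsionWeight, sum_add_distrib]
  exact Nat.add_le_add (sum_card_le_card_of_pairwiseDisjoint hf hT)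
    (sum_card_le_card_of_pairwiseDisjoint
      (fun x hx y hy hxy ↦ disjoint_filter_filter (hf hx hy hxy))
      (fun x hx ↦ filter_subset_filter _ (hT x hx)))

section Codeword

variable {M L : ℕ} (S : Finset (Fin M × ZMod L))

lemma Darr_self (i : Fin M) : Darr S i i = (chan S i - chan S i).erase 0 :=
  if_pos rfl

lemma Darr_of_ne {i j : Fin M} (hij : i ≠ j) : Darr S i j = chan S i - chan S j :=
  if_neg hij

lemma sum_card_chan : ∑ i, #(chan S i) = #S := by
  have card_chan (i : Fin M) : #(chan S i) = #{p ∈ S | p.1 = i} := by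
    refine card_image_of_injOn fun p hp q hq hpq ↦ ?_
    exact Prod.ext ((mem_filter.1 hp).2.trans (mem_filter.1 hq).2.symm) hpq
  simp only [card_chan]
  exact (card_eq_sum_card_fiberwise fun _ _ ↦ mem_coe.2 (mem_univ _)).symm

end Codeword

lemma two_mul_card_chan_le {M k m : ℕ} (hm : ∀ p : ℕ, p.Prime → p ∣ m → 2 * k + 1 ≤ p)
    (S : Finset (Fin M × ZMod (k * m))) (i : Fin M) (hS : #(chan S i) ≤ k + 1) :
    2 * #(chan S i) ≤ torsionWeight k (Darr S i i) + 2 := by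
  rcases (chan S i).eq_empty_or_nonempty with hi | hi
  · simp [hi]
  · rw [Darr_self, torsionWeight_erase_zero_add_two k hi.zero_mem_sub]
    refine two_mul_card_le_torsionWeight_sub (fun H _ ↦ ?_) hi
    exact (natCard_addSubgroup_zmod_dvd_or_le hm H).imp_right fun hH ↦ by omega

lemma le_card_Darr_of_ne {M k m : ℕ} (hm : ∀ p : ℕ, p.Prime → p ∣ m → 2 * k + 1 ≤ p)
    (S : Finset (Fin M × ZMod (k * m))) {i j : Fin M} (hij : i ≠ j)
    (hi : (chan S i).Nonempty) (hj : (chan S j).Nonempty)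
    (hS : k + 1 ≤ #(chan S i) + #(chan S j)) : k ≤ #(Darr S i j) := by
  rw [Darr_of_ne S hij, sub_eq_add_neg]
  refine le_card_add_of_forall_card_dvd_or_le (fun H _ ↦ ?_) hi hj.neg (by rwa [card_neg])
  exact (natCard_addSubgroup_zmod_dvd_or_le hm H).imp_right fun hH ↦ by omega

lemma mul_two_mul_le_mul_torsionWeight_add_card_Darr {k m : ℕ}
    (hm : ∀ p : ℕ, p.Prime → p ∣ m → 2 * k + 1 ≤ p)
    {S : Finset (Fin 2 × ZMod (k * m))} (hS : #S = k + 1) :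
    k * (2 * k) ≤ k * (torsionWeight k (Darr S 0 0) + torsionWeight k (Darr S 1 1)) +
      2 * #(Darr S 0 1) := by
  have hchan : #(chan S 0) + #(chan S 1) = k + 1 := by
    rw [← hS, ← sum_card_chan, Fin.sum_univ_two]
  have hdiag₀ := two_mul_card_chan_le hm S 0 (by omega)
  have hdiag₁ := two_mul_card_chan_le hm S 1 (by omega)
  by_cases hmixed : (chan S 0).Nonempty ∧ (chan S 1).Nonempty
  · have hoff := le_card_Darr_of_ne hm S (by decide) hmixed.1 hmixed.2 hchan.ge
    have hdiag : 2 * k ≤ torsionWeight k (Darr S 0 0) + torsionWeight k (Darr S 1 1) + 2 := by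
      omega
    linarith [Nat.mul_le_mul_left k hdiag]
  · refine le_add_right (Nat.mul_le_mul_left k ?_)
    have hpure : #(chan S 0) = 0 ∨ #(chan S 1) = 0 := by
      simpa only [card_eq_zero, ← not_nonempty_iff_eq_empty] using not_and_or.1 hmixed
    omega

namespace IsMCCAC

variable {M L w : ℕ} {C : Finset (Finset (Fin M × ZMod L))}

lemma pairwiseDisjoint_Darr (hC : IsMCCAC M L w C) (i j : Fin M) :
    (C : Set (Finset (Fin M × ZMod L))).PairwiseDisjoint fun S ↦ Darr S i j :=
  fun S hS S' hS' hne ↦ hC.2 S hS S' hS' hne i j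

lemma sum_card_Darr_le [NeZero L] (hC : IsMCCAC M L w C) (i j : Fin M) :
    ∑ S ∈ C, #(Darr S i j) ≤ L := by
  simpa [ZMod.card] using
    sum_card_le_card_of_pairwiseDisjoint (hC.pairwiseDisjoint_Darr i j) fun S _ ↦ subset_univ _

lemma sum_torsionWeight_Darr_self_add_two_le [NeZero L] (hC : IsMCCAC M L w C) (i : Fin M)
    {k : ℕ} (hk : 0 < k) : ∑ S ∈ C, torsionWeight k (Darr S i i) + 2 ≤ L + k := by
  have hsub : ∀ S ∈ C, Darr S i i ⊆ univ.erase 0 := fun S _ ↦ by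
    rw [Darr_self]
    exact erase_subset_erase 0 (subset_univ _)
  calc ∑ S ∈ C, torsionWeight k (Darr S i i) + 2
      ≤ torsionWeight k ((univ : Finset (ZMod L)).erase 0) + 2 :=
        Nat.add_le_add_right (sum_torsionWeight_le k (hC.pairwiseDisjoint_Darr i i) hsub) 2
    _ = torsionWeight k (univ : Finset (ZMod L)) :=
        torsionWeight_erase_zero_add_two k (mem_univ 0)
    _ ≤ L + k := by simpa [ZMod.card] using torsionWeight_univ_le (G := ZMod L) hk

end IsMCCAC

theorem IsMCCAC.card_mul_add_two_le {k m : ℕ} [NeZero (k * m)]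
    (hm : ∀ p : ℕ, p.Prime → p ∣ m → 2 * k + 1 ≤ p)
    {C : Finset (Finset (Fin 2 × ZMod (k * m)))} (hC : IsMCCAC 2 (k * m) (k + 1) C) :
    #C * k + 2 ≤ m + k + k * m := by
  have hk : 0 < k := Nat.pos_of_ne_zero (left_ne_zero_of_mul (NeZero.ne (k * m)))
  have hsum := sum_le_sum fun S hS ↦
    mul_two_mul_le_mul_torsionWeight_add_card_Darr hm (hC.1 S hS)
  simp only [sum_const, smul_eq_mul, sum_add_distrib, ← mul_sum] at hsum
  have hdiag₀ := hC.sum_torsionWeight_Darr_self_add_two_le 0 hk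
  have hdiag₁ := hC.sum_torsionWeight_Darr_self_add_two_le 1 hk
  have hoff := hC.sum_card_Darr_le 0 1
  refine Nat.le_of_mul_le_mul_left ?_ hk
  linarith [Nat.mul_le_mul_left k hdiag₀, Nat.mul_le_mul_left k hdiag₁]

theorem stmt_8 (L' w : ℕ) (hL' : 0 < L') (hw : 2 ≤ w)
    (hprime : ∀ p : ℕ, p.Prime → p ∣ L' → 2 * w - 1 ≤ p)
    (C : Finset (Finset (Fin 2 × ZMod ((w - 1) * L'))))
    (hC : IsMCCAC 2 ((w - 1) * L') w C) :
    C.card ≤ L' + (L' + w - 3) / (w - 1) := by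
  obtain ⟨k, rfl⟩ : ∃ k, w = k + 1 := ⟨w - 1, by omega⟩
  have hk : 0 < k := by omega
  have : NeZero (k * L') := ⟨by positivity⟩
  have hcount : #C * k + 2 ≤ L' + k + k * L' :=
    IsMCCAC.card_mul_add_two_le (k := k) (fun p hp hpL ↦ by have := hprime p hp hpL; omega) hC
  change #C ≤ L' + (L' + (k + 1) - 3) / k
  rw [add_comm L', ← Nat.add_mul_div_left _ _ hk, Nat.le_div_iff_mul_le hk]
  omega
end
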